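/- arXiv:hep-th/0510168 — 2 statements merged into one kernel-verified Lean document; each statement's English description precedes it below -/
import Mathlib

section
/- Let P → X be a principal G-bundle, H a closed subgroup of G, and let P^h and P^{h'} be two principal H-subbundles of P that are isomorphic via an isomorphism Φ: P^h → P^{h'} over X. Then Φ extends to a vertical automorphism of P; consequently, isomorphic reduced H-structures over X are equivalent. -/
/-!
A topological model of principal bundles.  A principal bundle with structure group `G`,
total space `P` and base `X` is encoded by a free continuous right `G`-action whose
orbits are the fibers of the projection; local triviality (with `G`-equivariant
trivializations) is encoded by the existence of continuous local sections together with a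
continuous fiberwise "division" map (which produces the equivariant trivializations).
-/

structure PrincipalBundle (G : Type*) [Group G] [TopologicalSpace G]
    (P : Type*) [TopologicalSpace P] (X : Type*) [TopologicalSpace X] where
  /-- the right action of `G` on `P` -/
  act : P → G → P
  continuous_act : Continuous fun pg : P × G => act pg.1 pg.2
  act_one : ∀ p, act p 1 = p
  act_mul : ∀ p g₁ g₂, act (act p g₁) g₂ = act p (g₁ * g₂)
  free : ∀ p g, act p g = p → g = 1
  /-- the bundle projection -/
  proj : P → X
  continuous_proj : Continuous proj
  surj_proj : Function.Surjective proj
  proj_act : ∀ p g, proj (act p g) = proj p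
  /-- fiberwise division: for `p`, `q` in the same fiber, the unique `g` with `p·g = q` -/
  div : P × P → G
  act_div : ∀ p q, proj p = proj q → act p (div (p, q)) = q
  continuousOn_div : ContinuousOn div {pq : P × P | proj pq.1 = proj pq.2}
  locSection : ∀ x : X, ∃ (U : Set X) (s : X → P), IsOpen U ∧ x ∈ U ∧
    ContinuousOn s U ∧ ∀ y ∈ U, proj (s y) = y

variable {G : Type*} [Group G] [TopologicalSpace G]
  {P : Type*} [TopologicalSpace P] {X : Type*} [TopologicalSpace X]

/-- A principal `H`-subbundle (reduced `H`-structure) of a principal `G`-bundle: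
an `H`-invariant subset whose fibers are single `H`-orbits and which admits continuous
local sections; with the restricted action and projection it is a principal `H`-bundle
over `X`. -/
structure IsSubbundle (PB : PrincipalBundle G P X) (H : Subgroup G) (Q : Set P) : Prop where
  act_mem : ∀ p ∈ Q, ∀ h ∈ H, PB.act p h ∈ Q
  div_mem : ∀ p ∈ Q, ∀ q ∈ Q, PB.proj p = PB.proj q → PB.div (p, q) ∈ H
  locSection : ∀ x : X, ∃ (U : Set X) (s : X → P), IsOpen U ∧ x ∈ U ∧
    ContinuousOn s U ∧ ∀ y ∈ U, s y ∈ Q ∧ PB.proj (s y) = y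

/-- A vertical automorphism of a principal bundle: a `G`-equivariant homeomorphism of the
total space covering the identity of the base. -/
structure VertAut (PB : PrincipalBundle G P X) where
  toHomeomorph : P ≃ₜ P
  equivariant : ∀ p g, toHomeomorph (PB.act p g) = PB.act (toHomeomorph p) g
  vertical : ∀ p, PB.proj (toHomeomorph p) = PB.proj p

/-- Two reduced structures are equivalent if some vertical automorphism of `P` maps one
onto the other. -/
def EquivalentSub (PB : PrincipalBundle G P X) (Q Q' : Set P) : Prop :=
  ∃ Φ : VertAut PB, Φ.toHomeomorph '' Q = Q'

/-!
Over a local section `s` of `P^h`, the formula `s x · g ↦ φ (s x) · g` defines a continuous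
`G`-equivariant map.  Two points of `P^h` in one fiber differ by an element of `H`, so
`H`-equivariance makes the formula independent of the section and the local maps glue to an
endomorphism `F` of `P`.  An endomorphism over the identity moves `p` by an element of `G`, and is
inverted by moving `p` back: `F⁻¹ p = p · div (F p, p)`.
-/

namespace PrincipalBundle

variable (PB : PrincipalBundle G P X)

theorem act_injective (p : P) : Function.Injective (PB.act p) := by
  intro a b hab
  refine mul_inv_eq_one.mp (PB.free p (a * b⁻¹) ?_)
  rw [← PB.act_mul, hab, PB.act_mul, mul_inv_cancel, PB.act_one]

theorem div_self (p : P) : PB.div (p, p) = 1 :=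
  PB.free p _ (PB.act_div p p rfl)

theorem div_mul_div {p q r : P} (hpq : PB.proj p = PB.proj q) (hqr : PB.proj q = PB.proj r) :
    PB.div (p, q) * PB.div (q, r) = PB.div (p, r) := by
  apply PB.act_injective p
  rw [← PB.act_mul, PB.act_div p q hpq, PB.act_div q r hqr, PB.act_div p r (hpq.trans hqr)]

theorem div_act {p q : P} (hpq : PB.proj p = PB.proj q) (g : G) :
    PB.div (p, PB.act q g) = PB.div (p, q) * g := by
  apply PB.act_injective p
  rw [PB.act_div _ _ (hpq.trans (PB.proj_act q g).symm), ← PB.act_mul, PB.act_div p q hpq]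

end PrincipalBundle

namespace VertAut

variable {PB : PrincipalBundle G P X} {F : P → P}

theorem injective_of_equivariant (hequiv : ∀ p g, F (PB.act p g) = PB.act (F p) g)
    (hproj : ∀ p, PB.proj (F p) = PB.proj p) : Function.Injective F := by
  intro p q hpq
  have hfiber : PB.proj p = PB.proj q := by rw [← hproj p, hpq, hproj q]
  have hfix : PB.act (F p) (PB.div (p, q)) = F p := by
    rw [← hequiv, PB.act_div p q hfiber, hpq]
  rw [← PB.act_div p q hfiber, PB.free _ _ hfix, PB.act_one]

theorem rightInverse_act_div (hequiv : ∀ p g, F (PB.act p g) = PB.act (F p) g)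
    (hproj : ∀ p, PB.proj (F p) = PB.proj p) :
    Function.RightInverse (fun p => PB.act p (PB.div (F p, p))) F := fun p => by
  rw [hequiv, PB.act_div _ _ (hproj p)]

theorem continuous_act_div (hcont : Continuous F) (hproj : ∀ p, PB.proj (F p) = PB.proj p) :
    Continuous fun p => PB.act p (PB.div (F p, p)) :=
  PB.continuous_act.comp <| continuous_id.prodMk <|
    PB.continuousOn_div.comp_continuous (hcont.prodMk continuous_id) hproj

/-- The vertical automorphism given by a continuous `G`-equivariant map over the identity of the
base; invertibility is automatic. -/
def ofEquivariant (hcont : Continuous F) (hequiv : ∀ p g, F (PB.act p g) = PB.act (F p) g)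
    (hproj : ∀ p, PB.proj (F p) = PB.proj p) : VertAut PB where
  toHomeomorph :=
    { toFun := F
      invFun := fun p => PB.act p (PB.div (F p, p))
      left_inv := (rightInverse_act_div hequiv hproj).rightInverse_of_injective
        (injective_of_equivariant hequiv hproj)
      right_inv := rightInverse_act_div hequiv hproj
      continuous_toFun := hcont
      continuous_invFun := continuous_act_div hcont hproj }
  equivariant := hequiv
  vertical := hproj

end VertAut

namespace IsSubbundle

variable {P' : Type*} [TopologicalSpace P'] {X' : Type*} [TopologicalSpace X']
  {PB : PrincipalBundle G P X} {PB' : PrincipalBundle G P' X'} {H : Subgroup G} {Q : Set P}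
  {φ : P → P'}

theorem exists_mem_proj_eq (hQ : IsSubbundle PB H Q) (x : X) : ∃ q ∈ Q, PB.proj q = x := by
  obtain ⟨U, s, -, hx, -, hs⟩ := hQ.locSection x
  exact ⟨s x, hs x hx⟩

/-- A point of the reduced structure `Q` in the fiber over `x`, chosen without any continuity
in `x`. -/
noncomputable def fiberPoint (hQ : IsSubbundle PB H Q) (x : X) : P :=
  (hQ.exists_mem_proj_eq x).choose

theorem fiberPoint_mem (hQ : IsSubbundle PB H Q) (x : X) : hQ.fiberPoint x ∈ Q :=
  (hQ.exists_mem_proj_eq x).choose_spec.1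

theorem proj_fiberPoint (hQ : IsSubbundle PB H Q) (x : X) : PB.proj (hQ.fiberPoint x) = x :=
  (hQ.exists_mem_proj_eq x).choose_spec.2

/-- The `G`-equivariant extension to `P` of a map `φ` from a reduced structure `Q` of `P` to a
second principal `G`-bundle, possibly over another base: `q · g ↦ φ q · g` for the chosen point `q`
of `Q` in each fiber. The values of `φ` outside `Q` are ignored. -/
noncomputable def extend (hQ : IsSubbundle PB H Q) (PB' : PrincipalBundle G P' X') (φ : P → P')
    (p : P) : P' :=
  PB'.act (φ (hQ.fiberPoint (PB.proj p))) (PB.div (hQ.fiberPoint (PB.proj p), p))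

theorem extend_act (hQ : IsSubbundle PB H Q) (p : P) (g : G) :
    hQ.extend PB' φ (PB.act p g) = PB'.act (hQ.extend PB' φ p) g := by
  simp only [extend, PB.proj_act, PB.div_act (hQ.proj_fiberPoint _), PB'.act_mul]

theorem proj_extend (hQ : IsSubbundle PB H Q) {f : X → X'}
    (hproj : ∀ q ∈ Q, PB'.proj (φ q) = f (PB.proj q)) (p : P) :
    PB'.proj (hQ.extend PB' φ p) = f (PB.proj p) := by
  rw [extend, PB'.proj_act, hproj _ (hQ.fiberPoint_mem _), hQ.proj_fiberPoint]

theorem extend_eq_act_div (hQ : IsSubbundle PB H Q)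
    (hequiv : ∀ q ∈ Q, ∀ h ∈ H, φ (PB.act q h) = PB'.act (φ q) h)
    {q : P} (hq : q ∈ Q) {p : P} (hqp : PB.proj q = PB.proj p) :
    hQ.extend PB' φ p = PB'.act (φ q) (PB.div (q, p)) := by
  set q₀ := hQ.fiberPoint (PB.proj p) with hq₀_def
  have hq₀ : q₀ ∈ Q := hQ.fiberPoint_mem _
  have hq₀q : PB.proj q₀ = PB.proj q := (hQ.proj_fiberPoint _).trans hqp.symm
  calc hQ.extend PB' φ p
      = PB'.act (φ q₀) (PB.div (q₀, q) * PB.div (q, p)) := by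
        rw [PB.div_mul_div hq₀q hqp, hq₀_def, extend]
    _ = PB'.act (φ (PB.act q₀ (PB.div (q₀, q)))) (PB.div (q, p)) := by
        rw [hequiv q₀ hq₀ _ (hQ.div_mem q₀ hq₀ q hq hq₀q), PB'.act_mul]
    _ = PB'.act (φ q) (PB.div (q, p)) := by rw [PB.act_div q₀ q hq₀q]

theorem extend_eqOn (hQ : IsSubbundle PB H Q)
    (hequiv : ∀ q ∈ Q, ∀ h ∈ H, φ (PB.act q h) = PB'.act (φ q) h) :
    Set.EqOn (hQ.extend PB' φ) φ Q := fun q hq => by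
  rw [hQ.extend_eq_act_div hequiv hq rfl, PB.div_self, PB'.act_one]

theorem continuous_extend (hQ : IsSubbundle PB H Q)
    (hequiv : ∀ q ∈ Q, ∀ h ∈ H, φ (PB.act q h) = PB'.act (φ q) h) (hcont : ContinuousOn φ Q) :
    Continuous (hQ.extend PB' φ) := by
  refine continuous_iff_continuousAt.mpr fun p => ?_
  obtain ⟨U, s, hU, hpU, hs, hsQ⟩ := hQ.locSection (PB.proj p)
  have hs_proj : ContinuousOn (fun r => s (PB.proj r)) (PB.proj ⁻¹' U) :=
    hs.comp PB.continuous_proj.continuousOn (Set.mapsTo_preimage _ _)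
  have hφs : ContinuousOn (fun r => φ (s (PB.proj r))) (PB.proj ⁻¹' U) :=
    hcont.comp hs_proj fun r hr => (hsQ _ hr).1
  have hdiv : ContinuousOn (fun r => PB.div (s (PB.proj r), r)) (PB.proj ⁻¹' U) :=
    PB.continuousOn_div.comp (hs_proj.prodMk continuousOn_id) fun r hr => (hsQ _ hr).2
  have hextend : ContinuousOn (hQ.extend PB' φ) (PB.proj ⁻¹' U) :=
    (PB'.continuous_act.comp_continuousOn (hφs.prodMk hdiv)).congr fun r hr =>
      hQ.extend_eq_act_div hequiv (hsQ _ hr).1 (hsQ _ hr).2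
  exact hextend.continuousAt ((hU.preimage PB.continuous_proj).mem_nhds hpU)

end IsSubbundle

theorem isomorphism_of_reduced_structures_extends_to_vertAut_general
    (PB : PrincipalBundle G P X) (H : Subgroup G) {Q : Set P} (hQ : IsSubbundle PB H Q)
    (φ : P → P) (hproj : ∀ p ∈ Q, PB.proj (φ p) = PB.proj p)
    (hequiv : ∀ p ∈ Q, ∀ g ∈ H, φ (PB.act p g) = PB.act (φ p) g) (hcont : ContinuousOn φ Q) :
    (∃ Ψ : VertAut PB, ∀ p ∈ Q, Ψ.toHomeomorph p = φ p) ∧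
    EquivalentSub PB Q (φ '' Q) := by
  let Ψ : VertAut PB := VertAut.ofEquivariant (hQ.continuous_extend hequiv hcont) hQ.extend_act
    (hQ.proj_extend (f := id) hproj)
  have hΨ : Set.EqOn Ψ.toHomeomorph φ Q := hQ.extend_eqOn hequiv
  exact ⟨⟨Ψ, hΨ⟩, Ψ, hΨ.image_eq⟩

/-- Let `P^h` and `P^{h'}` be two principal `H`-subbundles of a principal
`G`-bundle `P → X` which are isomorphic over `X` via an `H`-equivariant homeomorphism
`φ : P^h → P^{h'}` (with inverse `ψ`) commuting with the projections to `X`.  Then `φ`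
extends to a vertical automorphism of `P`; consequently, the isomorphic reduced
`H`-structures `P^h` and `P^{h'}` are equivalent. -/
theorem isomorphism_of_reduced_structures_extends_to_vertAut
    (PB : PrincipalBundle G P X) (H : Subgroup G) (hH : IsClosed (H : Set G))
    {Q Q' : Set P} (hQ : IsSubbundle PB H Q) (hQ' : IsSubbundle PB H Q')
    (φ ψ : P → P)
    (hφQ : Set.MapsTo φ Q Q') (hψQ : Set.MapsTo ψ Q' Q)
    (hinv : ∀ p ∈ Q, ψ (φ p) = p) (hinv' : ∀ p ∈ Q', φ (ψ p) = p)
    (hproj : ∀ p ∈ Q, PB.proj (φ p) = PB.proj p)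
    (hequiv : ∀ p ∈ Q, ∀ g ∈ H, φ (PB.act p g) = PB.act (φ p) g)
    (hcont : ContinuousOn φ Q) (hcont' : ContinuousOn ψ Q') :
    (∃ Ψ : VertAut PB, ∀ p ∈ Q, Ψ.toHomeomorph p = φ p) ∧
    EquivalentSub PB Q Q' := by
  have himage : φ '' Q = Q' := hφQ.image_subset.antisymm fun p hp => ⟨ψ p, hψQ hp, hinv' p hp⟩
  exact himage ▸
    isomorphism_of_reduced_structures_extends_to_vertAut_general PB H hQ φ hproj hequiv hcont
end

section
/- Let P → X be a principal G-bundle, H a closed subgroup of G, Σ = P/H, and Y = (P × V)/H the vector bundle over Σ associated to the principal H-bundle P → P/H. For every global section h of Σ → X with corresponding reduced subbundle P^h, there is a one-to-one correspondence between the global sections s_h of the P^h-associated bundle Y^h = (P^h × V)/H → X and the global sections s of the composite fiber bundle Y → Σ → X that project onto h, i.e., satisfy π_{YΣ} ∘ s = h; the correspondence is s = i_h ∘ s_h, where i_h: Y^h → Y is the canonical injection with image π_{YΣ}^{-1}(h(X)). -/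
variable {G : Type*} [Group G] [TopologicalSpace G]
  {P : Type*} [TopologicalSpace P] {X : Type*} [TopologicalSpace X]

/-- The orbit equivalence relation of the right `H`-action on `P`; its quotient is
`Σ = P/H`. -/
def orbitSetoid (PB : PrincipalBundle G P X) (H : Subgroup G) : Setoid P where
  r p q := ∃ h ∈ H, PB.act p h = q
  iseqv := by
    refine ⟨fun p => ⟨1, H.one_mem, PB.act_one p⟩, ?_, ?_⟩
    · rintro p q ⟨h, hh, rfl⟩
      exact ⟨h⁻¹, H.inv_mem hh, by rw [PB.act_mul, mul_inv_cancel, PB.act_one]⟩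
    · rintro p q r ⟨h₁, hh₁, rfl⟩ ⟨h₂, hh₂, rfl⟩
      exact ⟨h₁ * h₂, H.mul_mem hh₁ hh₂, (PB.act_mul p h₁ h₂).symm⟩

/-- The projection `π_{ΣX} : Σ = P/H → X`. -/
def projQuot (PB : PrincipalBundle G P X) (H : Subgroup G) :
    Quotient (orbitSetoid PB H) → X :=
  Quotient.lift PB.proj <| by
    rintro p q ⟨h, hh, rfl⟩
    exact (PB.proj_act p h).symm

section Stmt11

variable (PB : PrincipalBundle G P X) (H : Subgroup G)
variable (V : Type*) [AddCommGroup V] [Module ℝ V] [TopologicalSpace V]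
variable [MulAction H V] [ContinuousSMul H V]

/-- The relation identifying `(p, v)` with `(p·h, h⁻¹•v)`, `h ∈ H`, on `P × V`; its
quotient is the vector bundle `Y = (P × V)/H` over `Σ = P/H` associated to the principal
`H`-bundle `P → P/H`. -/
def assocHSetoid : Setoid (P × V) where
  r a b := ∃ h : H, b.1 = PB.act a.1 h ∧ b.2 = h⁻¹ • a.2
  iseqv := by
    refine ⟨fun a => ⟨1, by rw [Subgroup.coe_one, PB.act_one], by rw [inv_one, one_smul]⟩,
      ?_, ?_⟩
    · rintro a b ⟨h, h1, h2⟩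
      refine ⟨h⁻¹, ?_, ?_⟩
      · rw [h1, PB.act_mul]
        simp [PB.act_one]
      · rw [h2, inv_inv, smul_smul, mul_inv_cancel, one_smul]
    · rintro a b c ⟨h, h1, h2⟩ ⟨h', h1', h2'⟩
      refine ⟨h * h', ?_, ?_⟩
      · rw [h1', h1, PB.act_mul]
        simp
      · rw [h2', h2, smul_smul, mul_inv_rev]

/-- `π_{YΣ} : Y = (P × V)/H → Σ = P/H`. -/
def projYSigma : Quotient (assocHSetoid PB H V) → Quotient (orbitSetoid PB H) :=
  Quotient.lift (fun a => Quotient.mk (orbitSetoid PB H) a.1) <| by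
    rintro a b ⟨h, h1, h2⟩
    exact Quotient.sound ⟨(h : G), h.2, h1.symm⟩

variable (hs : X → Quotient (orbitSetoid PB H))

/-- The reduced subbundle `P^h = π_{PΣ}⁻¹(h(X))` determined by a global section `h` of
`Σ = P/H → X`. -/
def reducedSub : Set P :=
  {p : P | Quotient.mk (orbitSetoid PB H) p = hs (PB.proj p)}

/-- The relation identifying `(p, v)` with `(p·h, h⁻¹•v)`, `h ∈ H`, on `P^h × V`; its
quotient is the associated bundle `Y^h = (P^h × V)/H` over `X`. -/
def assocHSetoidSub : Setoid (reducedSub PB H hs × V) where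
  r a b := ∃ h : H, (b.1 : P) = PB.act a.1 h ∧ b.2 = h⁻¹ • a.2
  iseqv := by
    refine ⟨fun a => ⟨1, by rw [Subgroup.coe_one, PB.act_one], by rw [inv_one, one_smul]⟩,
      ?_, ?_⟩
    · rintro a b ⟨h, h1, h2⟩
      refine ⟨h⁻¹, ?_, ?_⟩
      · rw [h1, PB.act_mul]
        simp [PB.act_one]
      · rw [h2, inv_inv, smul_smul, mul_inv_cancel, one_smul]
    · rintro a b c ⟨h, h1, h2⟩ ⟨h', h1', h2'⟩
      refine ⟨h * h', ?_, ?_⟩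
      · rw [h1', h1, PB.act_mul]
        simp
      · rw [h2', h2, smul_smul, mul_inv_rev]

/-- The projection `Y^h = (P^h × V)/H → X`. -/
def projYh : Quotient (assocHSetoidSub PB H V hs) → X :=
  Quotient.lift (fun a => PB.proj (a.1 : P)) <| by
    rintro a b ⟨h, h1, h2⟩
    show PB.proj (a.1 : P) = PB.proj (b.1 : P)
    rw [h1, PB.proj_act]

/-- The canonical injection `i_h : Y^h ↪ Y` over `X`. -/
def injYh : Quotient (assocHSetoidSub PB H V hs) → Quotient (assocHSetoid PB H V) :=
  Quotient.lift (fun a => Quotient.mk (assocHSetoid PB H V) ((a.1 : P), a.2)) <| by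
    rintro a b ⟨h, h1, h2⟩
    exact Quotient.sound ⟨h, h1, h2⟩

/-!
`i_h : Y^h → Y` is induced on `H`-orbit spaces by the inclusion `P^h × V ⊆ P × V`.  The subset
`P^h × V` is `H`-saturated and `P × V → Y` is open, being the quotient by a group acting by
homeomorphisms, so the quotient topology on `Y^h` is the topology induced from `Y`: `i_h` is an
embedding.  A continuous section of `Y` over `h` takes values in the image
`π_{YΣ}⁻¹(h(X))` of `i_h`, hence factors through `i_h` uniquely and continuously.
-/

open Topology

theorem bijOn_comp_of_isEmbedding {A B C : Type*} [TopologicalSpace A] [TopologicalSpace B]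
    [TopologicalSpace C] {i : B → C} (hi : IsEmbedding i) {S : A → Set C}
    (hS : ∀ a, S a ⊆ Set.range i) :
    Set.BijOn (fun f : A → B => i ∘ f) {f | Continuous f ∧ ∀ a, i (f a) ∈ S a}
      {g | Continuous g ∧ ∀ a, g a ∈ S a} := by
  refine ⟨fun f hf => ⟨hi.continuous.comp hf.1, hf.2⟩, hi.injective.comp_left.injOn, ?_⟩
  rintro g ⟨hg, hgS⟩
  choose f hf using fun a => hS a (hgS a)
  obtain rfl : i ∘ f = g := funext hf
  exact ⟨f, ⟨hi.continuous_iff.2 hg, hgS⟩, rfl⟩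

section TopologicalFiber

variable {PB H hs} in
theorem mem_reducedSub_congr {p q : P}
    (hpq : Quotient.mk (orbitSetoid PB H) p = Quotient.mk (orbitSetoid PB H) q) :
    p ∈ reducedSub PB H hs ↔ q ∈ reducedSub PB H hs := by
  change Quotient.mk (orbitSetoid PB H) p = hs (projQuot PB H (Quotient.mk _ p)) ↔
    Quotient.mk (orbitSetoid PB H) q = hs (projQuot PB H (Quotient.mk _ q))
  rw [hpq]

variable (F : Type*) [MulAction H F]

/-- The left action `h • (p, v) = (p·h⁻¹, h • v)` of `H` on `P × F`, whose orbit space is the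
associated bundle `(P × F)/H`.  The inverse turns the right action on `P` into a left one. -/
abbrev assocAction : MulAction H (P × F) where
  smul h a := (PB.act a.1 (h⁻¹ : H), h • a.2)
  one_smul a := by
    change (PB.act a.1 ((1 : H)⁻¹ : H), (1 : H) • a.2) = a
    simp [PB.act_one]
  mul_smul g h a := by
    change (PB.act a.1 ((g * h)⁻¹ : H), (g * h) • a.2) =
      (PB.act (PB.act a.1 (h⁻¹ : H)) (g⁻¹ : H), g • h • a.2)
    simp [PB.act_mul, mul_smul]

theorem assocHSetoid_eq_orbitRel :
    letI := assocAction PB H F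
    assocHSetoid PB H F = MulAction.orbitRel H (P × F) := by
  let := assocAction PB H F
  have smul_def (h : H) (a : P × F) : h • a = (PB.act a.1 (h⁻¹ : H), h • a.2) := rfl
  ext a b
  rw [Setoid.comm' (MulAction.orbitRel H (P × F)), MulAction.orbitRel_apply]
  constructor
  · rintro ⟨h, hp, hv⟩
    exact ⟨h⁻¹, Prod.ext (by simp [smul_def, hp]) hv.symm⟩
  · rintro ⟨h, rfl⟩
    exact ⟨h⁻¹, rfl, by simp [smul_def]⟩

theorem injYh_injective : Function.Injective (injYh PB H F hs) := by
  rintro ⟨a⟩ ⟨b⟩ hab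
  obtain ⟨h, hp, hv⟩ := Quotient.exact hab
  exact Quotient.sound ⟨h, hp, hv⟩

theorem projYSigma_injYh (a : Quotient (assocHSetoidSub PB H F hs)) :
    projYSigma PB H F (injYh PB H F hs a) = hs (projYh PB H F hs a) := by
  obtain ⟨a⟩ := a
  exact a.1.2

theorem projYSigma_injYh_eq_iff (hs_sec : Function.LeftInverse (projQuot PB H) hs)
    (a : Quotient (assocHSetoidSub PB H F hs)) (x : X) :
    projYSigma PB H F (injYh PB H F hs a) = hs x ↔ projYh PB H F hs a = x := by
  rw [projYSigma_injYh, hs_sec.injective.eq_iff]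

theorem range_injYh (hs_sec : Function.LeftInverse (projQuot PB H) hs) :
    Set.range (injYh PB H F hs) = projYSigma PB H F ⁻¹' Set.range hs := by
  refine Set.Subset.antisymm ?_ ?_
  · rintro _ ⟨a, rfl⟩
    exact ⟨_, (projYSigma_injYh PB H hs F a).symm⟩
  · rintro ⟨p, v⟩ ⟨x, hx : hs x = Quotient.mk (orbitSetoid PB H) p⟩
    have hpx : PB.proj p = x := (congrArg (projQuot PB H) hx).symm.trans (hs_sec x)
    have hp : p ∈ reducedSub PB H hs := hx.symm.trans (congrArg hs hpx.symm)
    exact ⟨Quotient.mk _ (⟨p, hp⟩, v), rfl⟩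

variable [TopologicalSpace F] [ContinuousConstSMul H F]

theorem isOpenQuotientMap_mk_assocHSetoid :
    IsOpenQuotientMap (Quotient.mk (assocHSetoid PB H F)) := by
  let := assocAction PB H F
  have : ContinuousConstSMul H (P × F) := ⟨fun h =>
    (PB.continuous_act.comp (continuous_fst.prodMk continuous_const)).prodMk
      (continuous_snd.const_smul h)⟩
  rw [assocHSetoid_eq_orbitRel]
  exact MulAction.isOpenQuotientMap_quotientMk

theorem isEmbedding_injYh : IsEmbedding (injYh PB H F hs) := by
  refine isEmbedding_of_isOpenQuotientMap_of_isInducing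
    (Prod.map Subtype.val id : reducedSub PB H hs × F → P × F) _
    (Quotient.mk (assocHSetoidSub PB H F hs)) (Quotient.mk (assocHSetoid PB H F)) rfl
    (IsInducing.subtypeVal.prodMap .id) isQuotientMap_quotient_mk'
    (isOpenQuotientMap_mk_assocHSetoid PB H F) (injYh_injective PB H hs F) ?_
  rintro ⟨p, v⟩ ⟨_, ⟨a, rfl⟩, ha⟩
  have hp : p ∈ reducedSub PB H hs :=
    (mem_reducedSub_congr (congrArg (projYSigma PB H F) ha)).1 a.1.2
  exact ⟨(⟨p, hp⟩, v), rfl⟩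

theorem sections_of_reduced_assoc_bijOn_sections_covering_h_general
    (hs_sec : ∀ x, projQuot PB H (hs x) = x) :
    Function.Injective (injYh PB H F hs) ∧
    Set.range (injYh PB H F hs) = projYSigma PB H F ⁻¹' Set.range hs ∧
    Set.BijOn (fun sh : X → Quotient (assocHSetoidSub PB H F hs) => injYh PB H F hs ∘ sh)
      {sh | Continuous sh ∧ ∀ x, projYh PB H F hs (sh x) = x}
      {s : X → Quotient (assocHSetoid PB H F) |
        Continuous s ∧ (∀ x, projQuot PB H (projYSigma PB H F (s x)) = x) ∧
        ∀ x, projYSigma PB H F (s x) = hs x} := by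
  refine ⟨injYh_injective PB H hs F, range_injYh PB H hs F hs_sec, ?_⟩
  have fiber_subset_range : ∀ x, projYSigma PB H F ⁻¹' {hs x} ⊆ Set.range (injYh PB H F hs) := by
    intro x
    rw [range_injYh PB H hs F hs_sec]
    exact Set.preimage_mono (Set.singleton_subset_iff.2 ⟨x, rfl⟩)
  have section_of_covering (s : X → Quotient (assocHSetoid PB H F))
      (hs_cover : ∀ x, projYSigma PB H F (s x) = hs x) (x : X) :
      projQuot PB H (projYSigma PB H F (s x)) = x := by
    rw [hs_cover, hs_sec]
  simpa only [Set.mem_preimage, Set.mem_singleton_iff, projYSigma_injYh_eq_iff PB H hs F hs_sec,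
    and_iff_right_of_imp (section_of_covering _)] using
    bijOn_comp_of_isEmbedding (isEmbedding_injYh PB H hs F) fiber_subset_range

end TopologicalFiber

/-- Let `P → X` be a principal `G`-bundle, `H ⊂ G` a closed subgroup,
`Σ = P/H`, and `Y = (P × V)/H` the vector bundle over `Σ` associated to the principal
`H`-bundle `P → P/H`.  For every global section `h` of `Σ → X`, with reduced subbundle
`P^h = π_{PΣ}⁻¹(h(X))` and associated bundle `Y^h = (P^h × V)/H → X`, the canonical
injection `i_h : Y^h ↪ Y` is injective with image `π_{YΣ}⁻¹(h(X))`, and `s_h ↦ i_h ∘ s_h`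
is a one-to-one correspondence between global sections of `Y^h → X` and global sections of
the composite fiber bundle `Y → Σ → X` which project onto `h`. -/
theorem sections_of_reduced_assoc_bijOn_sections_covering_h
    (hH : IsClosed (H : Set G))
    (hs_cont : Continuous hs) (hs_sec : ∀ x, projQuot PB H (hs x) = x) :
    Function.Injective (injYh PB H V hs) ∧
    Set.range (injYh PB H V hs) = projYSigma PB H V ⁻¹' Set.range hs ∧
    Set.BijOn (fun sh : X → Quotient (assocHSetoidSub PB H V hs) => injYh PB H V hs ∘ sh)
      {sh | Continuous sh ∧ ∀ x, projYh PB H V hs (sh x) = x}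
      {s : X → Quotient (assocHSetoid PB H V) |
        Continuous s ∧ (∀ x, projQuot PB H (projYSigma PB H V (s x)) = x) ∧
        ∀ x, projYSigma PB H V (s x) = hs x} :=
  sections_of_reduced_assoc_bijOn_sections_covering_h_general PB H hs V hs_sec

end Stmt11
end
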